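/- The domain D̂ is nonempty if and only if D is nonempty. Moreover, if D is nonempty, then T* ≤ Σ_{i=1}^ℓ (x_i + y_i) for every (x_1,y_1,…,x_ℓ,y_ℓ) ∈ D. -/

import Mathlib

open Finset

noncomputable section

/-- Membership in the domain `D` of the optimization problem. -/
def memD (ℓ : ℕ) (a b x y : ℕ → ℝ) : Prop :=
  (∀ i ∈ Finset.Icc 1 ℓ, 0 < x i ∧ 0 < y i) ∧
  (∑ i ∈ Finset.Icc 1 ℓ, (x i + y i)) ≤ 1 ∧
  (∀ m ∈ Finset.Icc 1 ℓ,
    0 ≤ ∑ i ∈ Finset.Icc 1 m, (x i - (a i) ^ 2 / (2 * x i) - (b i) ^ 2 / (2 * y i)))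

/-- Membership in the domain `D̂`: elements of `D` where the cumulative condition holds with
equality for `m = ℓ`. -/
def memDhat (ℓ : ℕ) (a b x y : ℕ → ℝ) : Prop :=
  memD ℓ a b x y ∧
  (∑ i ∈ Finset.Icc 1 ℓ, (x i - (a i) ^ 2 / (2 * x i) - (b i) ^ 2 / (2 * y i))) = 0

/-- The convention `c_0 = c_ℓ = 0`. -/
def cbar (ℓ : ℕ) (c : ℕ → ℝ) (m : ℕ) : ℝ := if m = 0 ∨ m = ℓ then 0 else c m

/-- Membership in `D^m(c, c')`. -/
def memDm (a b : ℕ → ℝ) (N : ℝ) (m : ℕ) (c c' x y : ℝ) : Prop :=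
  0 < x ∧ 0 < y ∧ x + y ≤ N ∧ c + x - (a m) ^ 2 / (2 * x) - (b m) ^ 2 / (2 * y) = c'

/-- Membership in `D̃(c_1, …, c_{ℓ-1})`. -/
def memDtilde (ℓ : ℕ) (a b : ℕ → ℝ) (N : ℝ) (c x y : ℕ → ℝ) : Prop :=
  (∑ i ∈ Finset.Icc 1 ℓ, (x i + y i)) ≤ 1 ∧
  ∀ m ∈ Finset.Icc 1 ℓ, memDm a b N m (cbar ℓ c (m - 1)) (cbar ℓ c m) (x m) (y m)

/-- Membership in `D^c`. -/
def memDc (ℓ : ℕ) (a b : ℕ → ℝ) (N : ℝ) (c : ℕ → ℝ) : Prop :=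
  (∀ m ∈ Finset.Icc 1 (ℓ - 1), 0 ≤ c m) ∧ ∃ x y, memDtilde ℓ a b N c x y

/-- `(x, y)` minimizes `x + y` over `D^m(c, c')`. -/
def isArgminDm (a b : ℕ → ℝ) (N : ℝ) (m : ℕ) (c c' x y : ℝ) : Prop :=
  memDm a b N m c c' x y ∧ ∀ x' y' : ℝ, memDm a b N m c c' x' y' → x + y ≤ x' + y'

/-- The projection `D^m_x(c, C)` of `D^m(c, C)` to the first coordinate. -/
def Dmx (a b : ℕ → ℝ) (N : ℝ) (m : ℕ) (c C : ℝ) : Set ℝ :=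
  {x : ℝ | ∃ y : ℝ, memDm a b N m c C x y}

/-- The function `f(c̃) = sqrt((1 + c̃)/2 + sqrt(c̃²/4 + c̃))`. -/
def fval (c : ℝ) : ℝ := Real.sqrt ((1 + c) / 2 + Real.sqrt (c ^ 2 / 4 + c))

/-- `c̃ = (Σ b_i)² / (2 (Σ a_i)²)`. -/
def ctilde (ℓ : ℕ) (a b : ℕ → ℝ) : ℝ :=
  (∑ i ∈ Finset.Icc 1 ℓ, b i) ^ 2 / (2 * (∑ i ∈ Finset.Icc 1 ℓ, a i) ^ 2)

/-- The objective function `F` on `ℝ^{2ℓ}`. -/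
def Fobj (ℓ : ℕ) (a b x y : ℕ → ℝ) : ℝ :=
  (1 - ∑ i ∈ Finset.Icc 1 ℓ, (x i + y i)) *
  (1 - ∑ i ∈ Finset.Icc 1 ℓ, (y i + (a i) ^ 2 / (2 * x i) + (b i) ^ 2 / (2 * y i)))

/-- The late-expensive-obstacles assumption. -/
def LateExpensive (ℓ : ℕ) (a b : ℕ → ℝ) : Prop :=
  ∀ m, 1 ≤ m → m < ℓ →
    (∑ i ∈ Finset.Icc 1 m, b i) / (∑ i ∈ Finset.Icc 1 m, a i) <
      (∑ i ∈ Finset.Icc (m + 1) ℓ, b i) / (∑ i ∈ Finset.Icc (m + 1) ℓ, a i)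

/-- The ratio `(Σ_{j=p}^q b_j) / (Σ_{j=p}^q a_j)`. -/
def ratioBA (a b : ℕ → ℝ) (p q : ℕ) : ℝ :=
  (∑ j ∈ Finset.Icc p q, b j) / (∑ j ∈ Finset.Icc p q, a j)

/-- `u` (on indices `0, …, n+1`) is an admissible division into blocks. -/
def AdmissibleDiv (ℓ : ℕ) (a b : ℕ → ℝ) (n : ℕ) (u : ℕ → ℕ) : Prop :=
  u 0 = 0 ∧ u (n + 1) = ℓ ∧ (∀ i ≤ n, u i < u (i + 1)) ∧
  ∀ i ≤ n, ∀ m, u i < m → m < u (i + 1) →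
    ratioBA a b (u i + 1) m < ratioBA a b (m + 1) (u (i + 1))

/-- The canonical admissible division into blocks: the admissible division whose index
set is the intersection of the index sets of all admissible divisions into blocks. -/
def IsCanonicalDiv (ℓ : ℕ) (a b : ℕ → ℝ) (n : ℕ) (u : ℕ → ℕ) : Prop :=
  AdmissibleDiv ℓ a b n u ∧
  ∀ k, (∃ i ≤ n + 1, u i = k) ↔
    ∀ (n' : ℕ) (u' : ℕ → ℕ), AdmissibleDiv ℓ a b n' u' → ∃ i ≤ n' + 1, u' i = k

/-- The minimal time to cross one block with branching length `A` and obstacle length `B`. -/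
def blockTime (A B : ℝ) : ℝ :=
  A * fval (B ^ 2 / (2 * A ^ 2)) +
    B ^ 2 / (2 * A * (fval (B ^ 2 / (2 * A ^ 2)) - 1 / (2 * fval (B ^ 2 / (2 * A ^ 2)))))

/-- The total optimal time `T*` associated with a division into blocks. -/
def Tstar (a b : ℕ → ℝ) (n : ℕ) (u : ℕ → ℕ) : ℝ :=
  ∑ i ∈ Finset.range (n + 1),
    blockTime (∑ j ∈ Finset.Icc (u i + 1) (u (i + 1)), a j)
      (∑ j ∈ Finset.Icc (u i + 1) (u (i + 1)), b j)

/-- The coefficient appearing in the formula for the optimal `c_m`. -/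
def coefC (ℓ : ℕ) (a b : ℕ → ℝ) (m : ℕ) : ℝ :=
  ((∑ i ∈ Finset.Icc 1 m, a i) * (∑ i ∈ Finset.Icc (m + 1) ℓ, b i) -
    (∑ i ∈ Finset.Icc 1 m, b i) * (∑ i ∈ Finset.Icc (m + 1) ℓ, a i)) /
    (∑ i ∈ Finset.Icc 1 ℓ, b i)

/-!
The lower bound is weak Lagrangian duality, with one multiplier per block. For every `l ∈ [0, 1]`,
AM-GM bounds `x + y - l * (x - a² / (2x) - b² / (2y))` from below by `2√(l/2) * (√(1 - l) a + b)`,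
which is linear in `(a, b)` and so can be summed over a block. The summand of `T*` belonging to a
block is the value of this bound at the optimal multiplier, an increasing function of `B / A`. In
the canonical division these ratios decrease from block to block, since two neighbouring blocks
violating this could be merged into a single admissible one. Hence the multipliers decrease as well,
and by Abel summation the constraints weighted by them add up to something nonnegative.

A point of `D` is moved into `D̂` by lowering `x_ℓ` until the last constraint becomes tight.
-/

section IntervalSums

lemma sum_Icc_add_sum_Icc {M : Type*} [AddCommMonoid M] (g : ℕ → M) {p q r : ℕ} (hpq : p ≤ q)
    (hqr : q ≤ r) :
    ∑ j ∈ Icc (p + 1) q, g j + ∑ j ∈ Icc (q + 1) r, g j = ∑ j ∈ Icc (p + 1) r, g j := by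
  simp only [Icc_add_one_left_eq_Ioc]
  exact sum_Ioc_consecutive g hpq hqr

lemma sum_Icc_add_one_eq_sub {M : Type*} [AddCommGroup M] (g : ℕ → M) {p q : ℕ} (hpq : p ≤ q) :
    ∑ j ∈ Icc (p + 1) q, g j = ∑ j ∈ Icc 1 q, g j - ∑ j ∈ Icc 1 p, g j :=
  eq_sub_of_add_eq' (sum_Icc_add_sum_Icc g p.zero_le hpq)

lemma sum_Icc_add_one_pos {M : Type*} [AddCommMonoid M] [PartialOrder M]
    [IsOrderedCancelAddMonoid M] {g : ℕ → M} {p q : ℕ} (hpq : p < q)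
    (hg : ∀ j ∈ Icc (p + 1) q, 0 < g j) : 0 < ∑ j ∈ Icc (p + 1) q, g j :=
  sum_pos hg (nonempty_Icc.2 hpq)

lemma mul_sub_mul_le_sum_mul_sub {R : Type*} [CommRing R] [LinearOrder R] [IsStrictOrderedRing R]
    {w G : ℕ → R} {n : ℕ} (hw : ∀ i < n, w (i + 1) ≤ w i) (hG : ∀ i < n, 0 ≤ G (i + 1)) :
    w n * G (n + 1) - w 0 * G 0 ≤ ∑ i ∈ range (n + 1), w i * (G (i + 1) - G i) := by
  induction n with
  | zero => simp [mul_sub]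
  | succ n ih =>
    have hprev := ih (fun i hi => hw i (by omega)) (fun i hi => hG i (by omega))
    have hstep : w (n + 1) * G (n + 1) ≤ w n * G (n + 1) :=
      mul_le_mul_of_nonneg_right (hw n n.lt_succ_self) (hG n n.lt_succ_self)
    rw [sum_range_succ]
    linarith

lemma sum_mul_sub_nonneg {R : Type*} [CommRing R] [LinearOrder R] [IsStrictOrderedRing R]
    {w G : ℕ → R} {n : ℕ} (hw : ∀ i < n, w (i + 1) ≤ w i) (hw_last : 0 ≤ w n) (hG₀ : G 0 = 0)
    (hG : ∀ i ≤ n, 0 ≤ G (i + 1)) : 0 ≤ ∑ i ∈ range (n + 1), w i * (G (i + 1) - G i) := by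
  refine le_trans ?_ (mul_sub_mul_le_sum_mul_sub hw fun i hi => hG i hi.le)
  rw [hG₀, mul_zero, sub_zero]
  exact mul_nonneg hw_last (hG n le_rfl)

lemma Icc_add_one_subset_Icc_one {u : ℕ → ℕ} {n i : ℕ} (hu : MonotoneOn u (Set.Iic (n + 1)))
    (hi : i ≤ n) : Icc (u i + 1) (u (i + 1)) ⊆ Icc 1 (u (n + 1)) :=
  Icc_subset_Icc (by omega) (hu (Set.mem_Iic.2 (by omega)) Set.self_mem_Iic (by omega))

end IntervalSums

section Duality

/-- The contribution `x - a² / (2x) - b² / (2y)` of one obstacle to the cumulative constraints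
that define `D`. -/
def netGain (a b x y : ℝ) : ℝ := x - a ^ 2 / (2 * x) - b ^ 2 / (2 * y)

/-- The Lagrange dual function of minimizing `x + y` subject to `0 ≤ netGain A B x y`, at the
multiplier `l ∈ [0, 1]`, for `A, B ≥ 0`. -/
def dualValue (l A B : ℝ) : ℝ := 2 * √(l / 2) * (√(1 - l) * A + B)

lemma sum_dualValue {ι : Type*} (s : Finset ι) (l : ℝ) (a b : ι → ℝ) :
    ∑ i ∈ s, dualValue l (a i) (b i) = dualValue l (∑ i ∈ s, a i) (∑ i ∈ s, b i) := by
  simp only [dualValue, mul_sum, ← sum_add_distrib]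

lemma two_mul_sqrt_mul_sqrt_mul_le {p q x : ℝ} (hp : 0 ≤ p) (hq : 0 ≤ q) (hx : 0 < x) (c : ℝ) :
    2 * (√p * √q) * c ≤ p * x + q * c ^ 2 / x := by
  have hsq : p * x + q * c ^ 2 / x - 2 * (√p * √q) * c = (√p * x - √q * c) ^ 2 / x := by
    rw [sub_sq, mul_pow, mul_pow, Real.sq_sqrt hp, Real.sq_sqrt hq]
    field_simp
    ring
  have : 0 ≤ (√p * x - √q * c) ^ 2 / x := by positivity
  linarith

lemma dualValue_add_mul_netGain_le {l x y : ℝ} (hl₀ : 0 ≤ l) (hl₁ : l ≤ 1) (hx : 0 < x)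
    (hy : 0 < y) (a b : ℝ) : dualValue l a b + l * netGain a b x y ≤ x + y := by
  have hl_half : 0 ≤ l / 2 := by positivity
  have hx_bound := two_mul_sqrt_mul_sqrt_mul_le (sub_nonneg.2 hl₁) hl_half hx a
  have hy_bound := two_mul_sqrt_mul_sqrt_mul_le zero_le_one hl_half hy b
  rw [Real.sqrt_one] at hy_bound
  have hgain : l * netGain a b x y = l * x - l / 2 * a ^ 2 / x - l / 2 * b ^ 2 / y := by
    unfold netGain
    field_simp
  rw [hgain, dualValue]
  linarith

end Duality

section OptimalMultiplier

lemma fval_sq {c : ℝ} (hc : 0 ≤ c) : fval c ^ 2 = (1 + c) / 2 + √(c ^ 2 / 4 + c) :=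
  Real.sq_sqrt (by positivity)

lemma fval_pos {c : ℝ} (hc : 0 ≤ c) : 0 < fval c :=
  Real.sqrt_pos.2 (by positivity)

lemma one_lt_two_mul_fval_sq {c : ℝ} (hc : 0 < c) : 1 < 2 * fval c ^ 2 := by
  rw [fval_sq hc.le]
  linarith [Real.sqrt_nonneg (c ^ 2 / 4 + c)]

lemma two_mul_fval_sq_sub_one_sq {c : ℝ} (hc : 0 ≤ c) :
    (2 * fval c ^ 2 - 1) ^ 2 = 2 * c * (1 + 2 * fval c ^ 2) := by
  rw [fval_sq hc]
  linear_combination 4 * Real.sq_sqrt (show 0 ≤ c ^ 2 / 4 + c by positivity)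

lemma monotoneOn_fval : MonotoneOn fval (Set.Ici 0) := by
  intro c (hc : 0 ≤ c) d _ hcd
  unfold fval
  gcongr

/-- The multiplier at which the dual function of a block with `B / A = r` is maximal. -/
def optMultiplier (r : ℝ) : ℝ := 1 - 1 / (1 + 2 * fval (r ^ 2 / 2) ^ 2)

lemma optMultiplier_nonneg (r : ℝ) : 0 ≤ optMultiplier r :=
  sub_nonneg.2 (div_le_one_of_le₀ (le_add_of_nonneg_right (by positivity)) (by positivity))

lemma optMultiplier_le_one (r : ℝ) : optMultiplier r ≤ 1 :=
  sub_le_self _ (by positivity)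

lemma monotoneOn_optMultiplier : MonotoneOn optMultiplier (Set.Ici 0) := by
  intro r (hr : 0 ≤ r) s _ hrs
  have hf : fval (r ^ 2 / 2) ≤ fval (s ^ 2 / 2) :=
    monotoneOn_fval (Set.mem_Ici.2 (by positivity)) (Set.mem_Ici.2 (by positivity)) (by gcongr)
  have hf₀ : 0 < fval (r ^ 2 / 2) := fval_pos (by positivity)
  unfold optMultiplier
  gcongr

/-- Stationarity of `l ↦ dualValue l A B` at `optMultiplier (B / A)`. -/
lemma mul_two_mul_fval_sq_sub_one {A B : ℝ} (hA : 0 < A) (hB : 0 < B) :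
    A * (2 * fval (B ^ 2 / (2 * A ^ 2)) ^ 2 - 1) =
      B * √(1 + 2 * fval (B ^ 2 / (2 * A ^ 2)) ^ 2) := by
  have hc : 0 < B ^ 2 / (2 * A ^ 2) := by positivity
  have hf := one_lt_two_mul_fval_sq hc
  have hsq := two_mul_fval_sq_sub_one_sq hc.le
  set f := fval (B ^ 2 / (2 * A ^ 2))
  refine (pow_left_inj₀ (mul_nonneg hA.le (by linarith)) (by positivity) two_ne_zero).1 ?_
  rw [mul_pow, mul_pow, hsq, Real.sq_sqrt (by positivity)]
  field_simp

lemma blockTime_eq_dualValue {A B : ℝ} (hA : 0 < A) (hB : 0 < B) :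
    blockTime A B = dualValue (optMultiplier (B / A)) A B := by
  have hc : 0 < B ^ 2 / (2 * A ^ 2) := by positivity
  have hratio : (B / A) ^ 2 / 2 = B ^ 2 / (2 * A ^ 2) := by ring
  have hf₀ := fval_pos hc.le
  have hstat := mul_two_mul_fval_sq_sub_one hA hB
  rw [blockTime, dualValue, optMultiplier, hratio]
  set f := fval (B ^ 2 / (2 * A ^ 2))
  set s := √(1 + 2 * f ^ 2)
  have hs : 0 < s := Real.sqrt_pos.2 (by positivity)
  have hs_sq : s ^ 2 = 1 + 2 * f ^ 2 := Real.sq_sqrt (by positivity)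
  have hsqrt_half : √((1 - 1 / (1 + 2 * f ^ 2)) / 2) = f / s := by
    rw [Real.sqrt_eq_iff_mul_self_eq_of_pos (by positivity), ← hs_sq]
    field_simp
    linarith
  have hsqrt_compl : √(1 - (1 - 1 / (1 + 2 * f ^ 2))) = 1 / s := by
    rw [sub_sub_cancel, Real.sqrt_div zero_le_one, Real.sqrt_one]
  have htime : B ^ 2 / (2 * A * (f - 1 / (2 * f))) = B * f / s := by
    have hden : 2 * A * (f - 1 / (2 * f)) = B * s / f := by
      rw [← hstat]
      field_simp
    rw [hden]
    field_simp
  rw [hsqrt_half, hsqrt_compl, htime]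
  field_simp
  linear_combination A * hs_sq + hstat

lemma blockTime_add_optMultiplier_mul_sum_netGain_le {ι : Type*} {s : Finset ι} {a b x y : ι → ℝ}
    (hA : 0 < ∑ i ∈ s, a i) (hB : 0 < ∑ i ∈ s, b i) (hxy : ∀ i ∈ s, 0 < x i ∧ 0 < y i) :
    blockTime (∑ i ∈ s, a i) (∑ i ∈ s, b i) +
        optMultiplier ((∑ i ∈ s, b i) / ∑ i ∈ s, a i) *
          ∑ i ∈ s, netGain (a i) (b i) (x i) (y i) ≤
      ∑ i ∈ s, (x i + y i) := by
  rw [blockTime_eq_dualValue hA hB, ← sum_dualValue, mul_sum, ← sum_add_distrib]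
  exact sum_le_sum fun i hi => dualValue_add_mul_netGain_le (optMultiplier_nonneg _)
    (optMultiplier_le_one _) (hxy i hi).1 (hxy i hi).2 _ _

end OptimalMultiplier

section Mediant

variable {K : Type*} [Field K] [LinearOrder K] [IsStrictOrderedRing K] {a b c d r : K}

lemma lt_add_div_add_of_le_of_lt (hb : 0 < b) (hd : 0 < d) (hab : r ≤ a / b) (hcd : r < c / d) :
    r < (a + c) / (b + d) := by
  rw [le_div_iff₀ hb] at hab
  rw [lt_div_iff₀ hd] at hcd
  rw [lt_div_iff₀ (add_pos hb hd)]
  linarith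

lemma add_div_add_lt_of_lt_of_le (hb : 0 < b) (hd : 0 < d) (hab : a / b < r) (hcd : c / d ≤ r) :
    (a + c) / (b + d) < r := by
  rw [div_lt_iff₀ hb] at hab
  rw [div_le_iff₀ hd] at hcd
  rw [div_lt_iff₀ (add_pos hb hd)]
  linarith

end Mediant

section Merging

/-- The block of obstacles `p + 1, …, q` satisfies the ratio condition that an admissible division
imposes on each of its blocks. -/
def IsAdmissibleBlock (a b : ℕ → ℝ) (p q : ℕ) : Prop :=
  ∀ m, p < m → m < q → ratioBA a b (p + 1) m < ratioBA a b (m + 1) q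

variable {a b : ℕ → ℝ} {p q r : ℕ}

lemma lt_ratioBA_of_le_of_lt {ρ : ℝ} (hpq : p < q) (hqr : q < r)
    (ha : ∀ i ∈ Icc (p + 1) r, 0 < a i) (hleft : ρ ≤ ratioBA a b (p + 1) q)
    (hright : ρ < ratioBA a b (q + 1) r) : ρ < ratioBA a b (p + 1) r := by
  rw [ratioBA, ← sum_Icc_add_sum_Icc b hpq.le hqr.le, ← sum_Icc_add_sum_Icc a hpq.le hqr.le]
  refine lt_add_div_add_of_le_of_lt (sum_Icc_add_one_pos hpq fun i hi => ?_)
    (sum_Icc_add_one_pos hqr fun i hi => ?_) hleft hright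
  · exact ha i (Icc_subset_Icc_right hqr.le hi)
  · exact ha i (Icc_subset_Icc_left (by omega) hi)

lemma ratioBA_lt_of_lt_of_le {ρ : ℝ} (hpq : p < q) (hqr : q < r)
    (ha : ∀ i ∈ Icc (p + 1) r, 0 < a i) (hleft : ratioBA a b (p + 1) q < ρ)
    (hright : ratioBA a b (q + 1) r ≤ ρ) : ratioBA a b (p + 1) r < ρ := by
  rw [ratioBA, ← sum_Icc_add_sum_Icc b hpq.le hqr.le, ← sum_Icc_add_sum_Icc a hpq.le hqr.le]
  refine add_div_add_lt_of_lt_of_le (sum_Icc_add_one_pos hpq fun i hi => ?_)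
    (sum_Icc_add_one_pos hqr fun i hi => ?_) hleft hright
  · exact ha i (Icc_subset_Icc_right hqr.le hi)
  · exact ha i (Icc_subset_Icc_left (by omega) hi)

lemma IsAdmissibleBlock.merge (hpq : p < q) (hqr : q < r) (ha : ∀ i ∈ Icc (p + 1) r, 0 < a i)
    (hleft : IsAdmissibleBlock a b p q) (hright : IsAdmissibleBlock a b q r)
    (hratio : ratioBA a b (p + 1) q < ratioBA a b (q + 1) r) : IsAdmissibleBlock a b p r := by
  intro m hpm hmr
  have ha_sub {s t : ℕ} (hs : p ≤ s) (ht : t ≤ r) : ∀ i ∈ Icc (s + 1) t, 0 < a i :=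
    fun i hi => ha i (Icc_subset_Icc (by omega) ht hi)
  rcases lt_trichotomy m q with hmq | rfl | hqm
  · have hsplit := hleft m hpm hmq
    have hprefix : ratioBA a b (p + 1) m < ratioBA a b (p + 1) q :=
      lt_ratioBA_of_le_of_lt hpm hmq (ha_sub le_rfl hqr.le) le_rfl hsplit
    exact lt_ratioBA_of_le_of_lt hmq hqr (ha_sub hpm.le le_rfl) hsplit.le (hprefix.trans hratio)
  · exact hratio
  · have hsplit := hright m hqm hmr
    have hsuffix : ratioBA a b (q + 1) r < ratioBA a b (m + 1) r :=
      ratioBA_lt_of_lt_of_le hqm hmr (ha_sub hpq.le le_rfl) hsplit le_rfl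
    exact ratioBA_lt_of_lt_of_le hpq hqm (ha_sub le_rfl hmr.le) (hratio.trans hsuffix) hsplit.le

end Merging

section Divisions

/-- The sequence `u` with its `j`-th term removed, used to merge two neighbouring blocks. -/
def eraseIndex {α : Type*} (u : ℕ → α) (j k : ℕ) : α := if k < j then u k else u (k + 1)

lemma eraseIndex_of_lt {α : Type*} (u : ℕ → α) {j k : ℕ} (h : k < j) : eraseIndex u j k = u k :=
  if_pos h

lemma eraseIndex_of_le {α : Type*} (u : ℕ → α) {j k : ℕ} (h : j ≤ k) :
    eraseIndex u j k = u (k + 1) :=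
  if_neg h.not_gt

lemma eraseIndex_rel_succ {α : Type*} {u : ℕ → α} {R : α → α → Prop} {n i : ℕ}
    (hu : ∀ k ≤ n + 1, R (u k) (u (k + 1))) (hi : R (u i) (u (i + 2))) :
    ∀ k ≤ n, R (eraseIndex u (i + 1) k) (eraseIndex u (i + 1) (k + 1)) := by
  intro k hk
  rcases lt_trichotomy k i with hki | rfl | hik
  · rw [eraseIndex_of_lt u (by omega), eraseIndex_of_lt u (by omega)]
    exact hu k (by omega)
  · rwa [eraseIndex_of_lt u (by omega), eraseIndex_of_le u (by omega)]
  · rw [eraseIndex_of_le u (by omega), eraseIndex_of_le u (by omega)]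
    exact hu (k + 1) (by omega)

variable {ℓ n : ℕ} {a b : ℕ → ℝ} {u : ℕ → ℕ}

lemma strictMonoOn_Iic_of_lt_add_one {α : Type*} [Preorder α] {u : ℕ → α}
    (hu : ∀ i ≤ n, u i < u (i + 1)) : StrictMonoOn u (Set.Iic (n + 1)) :=
  strictMonoOn_of_lt_succ Set.ordConnected_Iic fun i _ _ hi => hu i (Nat.le_of_succ_le_succ hi)

lemma AdmissibleDiv.strictMonoOn (h : AdmissibleDiv ℓ a b n u) :
    StrictMonoOn u (Set.Iic (n + 1)) :=
  strictMonoOn_Iic_of_lt_add_one h.2.2.1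

lemma AdmissibleDiv.le_last (h : AdmissibleDiv ℓ a b n u) {i : ℕ} (hi : i ≤ n + 1) : u i ≤ ℓ :=
  h.2.1 ▸ h.strictMonoOn.monotoneOn hi Set.self_mem_Iic hi

lemma AdmissibleDiv.eraseIndex {i : ℕ} (h : AdmissibleDiv ℓ a b (n + 1) u) (hi : i ≤ n)
    (hmerge : IsAdmissibleBlock a b (u i) (u (i + 2))) :
    AdmissibleDiv ℓ a b n (eraseIndex u (i + 1)) := by
  obtain ⟨hzero, hlast, hlt, hblock⟩ := h
  refine ⟨?_, ?_, eraseIndex_rel_succ hlt ?_,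
    eraseIndex_rel_succ (R := IsAdmissibleBlock a b) hblock hmerge⟩
  · rw [eraseIndex_of_lt u i.succ_pos, hzero]
  · rw [eraseIndex_of_le u (by omega), hlast]
  · exact (hlt i (by omega)).trans (hlt (i + 1) (by omega))

lemma IsCanonicalDiv.not_isAdmissibleBlock {i : ℕ} (h : IsCanonicalDiv ℓ a b n u) (hi : i < n) :
    ¬ IsAdmissibleBlock a b (u i) (u (i + 2)) := by
  intro hmerge
  obtain ⟨n, rfl⟩ := Nat.exists_eq_add_one_of_ne_zero (by omega : n ≠ 0)
  have hinj := h.1.strictMonoOn.injOn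
  obtain ⟨k, hk, hku⟩ := (h.2 (u (i + 1))).1 ⟨i + 1, by omega, rfl⟩ n _
    (h.1.eraseIndex (by omega) hmerge)
  rcases lt_or_ge k (i + 1) with hki | hik
  · rw [eraseIndex_of_lt u hki] at hku
    exact hki.ne (hinj (Set.mem_Iic.2 (by omega)) (Set.mem_Iic.2 (by omega)) hku)
  · rw [eraseIndex_of_le u hik] at hku
    have := hinj (Set.mem_Iic.2 (by omega)) (Set.mem_Iic.2 (by omega)) hku
    omega

lemma IsCanonicalDiv.ratioBA_succ_le {i : ℕ} (h : IsCanonicalDiv ℓ a b n u)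
    (ha : ∀ i ∈ Icc 1 ℓ, 0 < a i) (hi : i < n) :
    ratioBA a b (u (i + 1) + 1) (u (i + 2)) ≤ ratioBA a b (u i + 1) (u (i + 1)) := by
  have hlt := h.1.2.2.1
  have hblock := h.1.2.2.2
  refine le_of_not_gt fun hratio => h.not_isAdmissibleBlock hi ?_
  refine .merge (hlt i (by omega)) (hlt (i + 1) (by omega)) (fun j hj => ha j ?_)
    (hblock i (by omega)) (hblock (i + 1) (by omega)) hratio
  exact Icc_subset_Icc (by omega) (h.1.le_last (by omega)) hj

end Divisions

section LowerBound

variable {a b x y : ℕ → ℝ} {u : ℕ → ℕ} {n p q : ℕ}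

lemma ratioBA_pos (hpq : p < q) (ha : ∀ i ∈ Icc (p + 1) q, 0 < a i)
    (hb : ∀ i ∈ Icc (p + 1) q, 0 < b i) : 0 < ratioBA a b (p + 1) q :=
  div_pos (sum_Icc_add_one_pos hpq hb) (sum_Icc_add_one_pos hpq ha)

lemma blockTime_add_optMultiplier_mul_sub_le (hpq : p < q) (ha : ∀ i ∈ Icc (p + 1) q, 0 < a i)
    (hb : ∀ i ∈ Icc (p + 1) q, 0 < b i) (hxy : ∀ i ∈ Icc (p + 1) q, 0 < x i ∧ 0 < y i) :
    blockTime (∑ i ∈ Icc (p + 1) q, a i) (∑ i ∈ Icc (p + 1) q, b i) +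
        optMultiplier (ratioBA a b (p + 1) q) *
          (∑ i ∈ Icc 1 q, netGain (a i) (b i) (x i) (y i) -
            ∑ i ∈ Icc 1 p, netGain (a i) (b i) (x i) (y i)) ≤
      ∑ i ∈ Icc 1 q, (x i + y i) - ∑ i ∈ Icc 1 p, (x i + y i) := by
  simp only [← sum_Icc_add_one_eq_sub _ hpq.le]
  exact blockTime_add_optMultiplier_mul_sum_netGain_le (sum_Icc_add_one_pos hpq ha)
    (sum_Icc_add_one_pos hpq hb) hxy

lemma Tstar_le_sum_of_ratioBA_succ_le (hu₀ : u 0 = 0) (hu : ∀ i ≤ n, u i < u (i + 1))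
    (hratio : ∀ i < n,
      ratioBA a b (u (i + 1) + 1) (u (i + 2)) ≤ ratioBA a b (u i + 1) (u (i + 1)))
    (ha : ∀ j ∈ Icc 1 (u (n + 1)), 0 < a j) (hb : ∀ j ∈ Icc 1 (u (n + 1)), 0 < b j)
    (hxy : ∀ j ∈ Icc 1 (u (n + 1)), 0 < x j ∧ 0 < y j)
    (hgain : ∀ i ≤ n, 0 ≤ ∑ j ∈ Icc 1 (u (i + 1)), netGain (a j) (b j) (x j) (y j)) :
    Tstar a b n u ≤ ∑ j ∈ Icc 1 (u (n + 1)), (x j + y j) := by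
  have hsub {i : ℕ} (hi : i ≤ n) : Icc (u i + 1) (u (i + 1)) ⊆ Icc 1 (u (n + 1)) :=
    Icc_add_one_subset_Icc_one (strictMonoOn_Iic_of_lt_add_one hu).monotoneOn hi
  let w i := optMultiplier (ratioBA a b (u i + 1) (u (i + 1)))
  let G i := ∑ j ∈ Icc 1 (u i), netGain (a j) (b j) (x j) (y j)
  let S i := ∑ j ∈ Icc 1 (u i), (x j + y j)
  have hratio_pos {i : ℕ} (hi : i ≤ n) : 0 < ratioBA a b (u i + 1) (u (i + 1)) :=
    ratioBA_pos (hu i hi) (fun j hj => ha j (hsub hi hj)) fun j hj => hb j (hsub hi hj)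
  have hw : ∀ i < n, w (i + 1) ≤ w i := fun i hi =>
    monotoneOn_optMultiplier (hratio_pos hi).le (hratio_pos hi.le).le (hratio i hi)
  have hslack : 0 ≤ ∑ i ∈ range (n + 1), w i * (G (i + 1) - G i) :=
    sum_mul_sub_nonneg hw (optMultiplier_nonneg _) (by simp [G, hu₀]) hgain
  have hS₀ : S 0 = 0 := by simp [S, hu₀]
  calc Tstar a b n u
      ≤ Tstar a b n u + ∑ i ∈ range (n + 1), w i * (G (i + 1) - G i) :=
        le_add_of_nonneg_right hslack
    _ ≤ ∑ i ∈ range (n + 1), (S (i + 1) - S i) := by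
        rw [Tstar, ← sum_add_distrib]
        refine sum_le_sum fun i hi => ?_
        have hi : i ≤ n := mem_range_succ_iff.1 hi
        exact blockTime_add_optMultiplier_mul_sub_le (hu i hi) (fun j hj => ha j (hsub hi hj))
          (fun j hj => hb j (hsub hi hj)) fun j hj => hxy j (hsub hi hj)
    _ = ∑ j ∈ Icc 1 (u (n + 1)), (x j + y j) := by rw [sum_range_sub, hS₀, sub_zero]

lemma IsCanonicalDiv.Tstar_le_sum {ℓ : ℕ} (hcanon : IsCanonicalDiv ℓ a b n u)
    (ha : ∀ i ∈ Icc 1 ℓ, 0 < a i) (hb : ∀ i ∈ Icc 1 ℓ, 0 < b i) (hD : memD ℓ a b x y) :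
    Tstar a b n u ≤ ∑ i ∈ Icc 1 ℓ, (x i + y i) := by
  have hratio := fun i => hcanon.ratioBA_succ_le (i := i) ha
  have hle {i : ℕ} (hi : i ≤ n + 1) := hcanon.1.le_last hi
  obtain ⟨⟨hzero, rfl, hlt, -⟩, -⟩ := hcanon
  refine Tstar_le_sum_of_ratioBA_succ_le hzero hlt hratio ha hb hD.1 fun i hi => ?_
  exact hD.2.2 _ (mem_Icc.2 ⟨(hlt i hi).pos, hle (by omega)⟩)

end LowerBound

section Tightening

lemma strictMonoOn_netGain (a b y : ℝ) : StrictMonoOn (netGain a b · y) (Set.Ioi 0) := by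
  intro x (hx : 0 < x) z _ hxz
  have : a ^ 2 / (2 * z) ≤ a ^ 2 / (2 * x) := by gcongr
  simp only [netGain]
  linarith

lemma exists_pos_netGain_eq {a : ℝ} (ha : a ≠ 0) (b y t : ℝ) :
    ∃ z, 0 < z ∧ netGain a b z y = t := by
  set w := t + b ^ 2 / (2 * y) with hw
  -- The equation reads `2z² - 2wz - a² = 0`, and we take its positive root.
  have hsq : √(w ^ 2 + 2 * a ^ 2) ^ 2 = w ^ 2 + 2 * a ^ 2 := Real.sq_sqrt (by positivity)
  have hlt : |w| < √(w ^ 2 + 2 * a ^ 2) := by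
    rw [← Real.sqrt_sq_eq_abs]
    exact Real.sqrt_lt_sqrt (sq_nonneg w) (lt_add_of_pos_right _ (by positivity))
  set z := (w + √(w ^ 2 + 2 * a ^ 2)) / 2 with hz
  have hz₀ : 0 < z := by linarith [neg_abs_le w]
  have hroot : z - a ^ 2 / (2 * z) = w := by
    field_simp
    rw [hz]
    linear_combination hsq / 2
  exact ⟨z, hz₀, by rw [netGain, hroot, hw, add_sub_cancel_right]⟩

lemma exists_le_netGain_eq {a x : ℝ} (ha : a ≠ 0) (hx : 0 < x) {b y t : ℝ}
    (ht : t ≤ netGain a b x y) : ∃ z, 0 < z ∧ z ≤ x ∧ netGain a b z y = t := by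
  obtain ⟨z, hz, rfl⟩ := exists_pos_netGain_eq ha b y t
  exact ⟨z, hz, ((strictMonoOn_netGain a b y).le_iff_le hz hx).1 ht, rfl⟩

lemma netGain_update {ι : Type*} [DecidableEq ι] (a b x y : ι → ℝ) (j : ι) (z : ℝ) :
    (fun i => netGain (a i) (b i) (Function.update x j z i) (y i)) =
      Function.update (fun i => netGain (a i) (b i) (x i) (y i)) j
        (netGain (a j) (b j) z (y j)) :=
  funext <| Function.apply_update (fun i t => netGain (a i) (b i) t (y i)) x j z

lemma memD.memDhat_update {ℓ : ℕ} {a b x y : ℕ → ℝ} {z : ℝ} (hD : memD ℓ a b x y)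
    (hz₀ : 0 < z) (hzx : z ≤ x ℓ)
    (htight : ∑ i ∈ Icc 1 ℓ, netGain (a i) (b i) (Function.update x ℓ z i) (y i) = 0) :
    memDhat ℓ a b (Function.update x ℓ z) y := by
  obtain ⟨hxy, htime, hgain⟩ := hD
  refine ⟨⟨fun i hi => ⟨?_, (hxy i hi).2⟩, ?_, fun m hm => ?_⟩, htight⟩
  · obtain rfl | hne := eq_or_ne i ℓ
    · rwa [Function.update_self]
    · rw [Function.update_of_ne hne]
      exact (hxy i hi).1
  · refine (sum_le_sum fun i _ => ?_).trans htime
    gcongr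
    exact update_le_self_iff.2 hzx i
  · change 0 ≤ ∑ i ∈ Icc 1 m, netGain (a i) (b i) (Function.update x ℓ z i) (y i)
    obtain ⟨-, hmℓ⟩ := mem_Icc.1 hm
    obtain rfl | hlt := hmℓ.eq_or_lt
    · exact htight.ge
    · have hnotMem : ℓ ∉ Icc 1 m := fun hℓ => hlt.not_ge (mem_Icc.1 hℓ).2
      rw [netGain_update, sum_update_of_notMem hnotMem]
      exact hgain m hm

lemma memD.exists_memDhat {ℓ : ℕ} {a b x y : ℕ → ℝ} (hℓ : 1 ≤ ℓ) (ha : a ℓ ≠ 0)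
    (hD : memD ℓ a b x y) : ∃ x', memDhat ℓ a b x' y := by
  have hmem : ℓ ∈ Icc 1 ℓ := mem_Icc.2 ⟨hℓ, le_rfl⟩
  let g i := netGain (a i) (b i) (x i) (y i)
  have htarget : g ℓ - ∑ i ∈ Icc 1 ℓ, g i ≤ g ℓ := sub_le_self _ (hD.2.2 ℓ hmem)
  obtain ⟨z, hz₀, hzx, hz⟩ := exists_le_netGain_eq ha (hD.1 ℓ hmem).1 htarget
  refine ⟨_, hD.memDhat_update hz₀ hzx ?_⟩
  rw [netGain_update, hz, sum_update_of_mem hmem, sum_sdiff_eq_sub (singleton_subset_iff.2 hmem),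
    sum_singleton]
  ring

end Tightening

/-- `D̂` is nonempty iff `D` is nonempty; moreover, if `D` is nonempty, then
`T* ≤ Σ_i (x_i + y_i)` for every element of `D`. -/
theorem Dhat_nonempty_iff_D_nonempty (ℓ : ℕ) (hℓ : 1 ≤ ℓ) (a b : ℕ → ℝ)
    (ha : ∀ i ∈ Finset.Icc 1 ℓ, 0 < a i) (hb : ∀ i ∈ Finset.Icc 1 ℓ, 0 < b i)
    (nstar : ℕ) (ustar : ℕ → ℕ) (hcanon : IsCanonicalDiv ℓ a b nstar ustar) :
    ((∃ x y : ℕ → ℝ, memDhat ℓ a b x y) ↔ (∃ x y : ℕ → ℝ, memD ℓ a b x y)) ∧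
    ((∃ x y : ℕ → ℝ, memD ℓ a b x y) →
      ∀ x y : ℕ → ℝ, memD ℓ a b x y →
        Tstar a b nstar ustar ≤ ∑ i ∈ Finset.Icc 1 ℓ, (x i + y i)) := by
  refine ⟨⟨?_, ?_⟩, fun _ x y hD => hcanon.Tstar_le_sum ha hb hD⟩
  · rintro ⟨x, y, hDhat⟩
    exact ⟨x, y, hDhat.1⟩
  · rintro ⟨x, y, hD⟩
    obtain ⟨x', hDhat⟩ := hD.exists_memDhat hℓ (ha ℓ (mem_Icc.2 ⟨hℓ, le_rfl⟩)).ne'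
    exact ⟨x', y, hDhat⟩
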